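/- arXiv:2304.10795 — 3 statements merged into one kernel-verified Lean document; each statement's English description precedes it below -/
import Mathlib

section
/- For any k, l, m ∈ ℕ ∪ {∞} satisfying k + l + m = ∞ and m ≥ 1, there exists a Neumann subgroup Ŝ of M̂ = PGL(2,ℤ) with Ŝ not contained in M = PSL(2,ℤ) such that Ŝ has (k,l,m)-structure. -/
open Matrix Pointwise

noncomputable section

abbrev GL2Z := Matrix.GeneralLinearGroup (Fin 2) ℤ

/-- The subgroup {±I} of GL(2,ℤ), which is its center. -/
def pmI : Subgroup GL2Z := Subgroup.zpowers (-1)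

instance pmI_normal : pmI.Normal := by
  constructor
  rintro n hn g
  obtain ⟨k, hk⟩ := Subgroup.mem_zpowers_iff.mp hn
  have hc : Commute ((-1 : GL2Z) ^ k) g := (Commute.neg_one_left g).zpow_left k
  have : g * n * g⁻¹ = n := by
    rw [← hk, ← hc.eq]; group
  rw [this]; exact hn

/-- The extended modular group PGL(2,ℤ) = GL(2,ℤ)/{±I}. -/
abbrev Mhat := GL2Z ⧸ pmI

def pr : GL2Z →* Mhat := QuotientGroup.mk' pmI

def tauGL : GL2Z := ⟨!![1,1;0,1], !![1,-1;0,1], by decide, by decide⟩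
def nuGL : GL2Z := ⟨!![-1,0;0,1], !![-1,0;0,1], by decide, by decide⟩
def omegaGL : GL2Z := ⟨!![0,-1;1,0], !![0,1;-1,0], by decide, by decide⟩
def phiGL : GL2Z := ⟨!![0,-1;1,1], !![1,1;-1,0], by decide, by decide⟩

/-- τ, the class of [[1,1],[0,1]]. -/
def tau : Mhat := pr tauGL
/-- ν, the class of [[-1,0],[0,1]]. -/
def nu : Mhat := pr nuGL
/-- ω, the class of [[0,-1],[1,0]]. -/
def omega : Mhat := pr omegaGL
/-- φ, the class of [[0,-1],[1,1]]. -/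
def phi : Mhat := pr phiGL

/-- T̂ = ⟨τ, ν⟩, the stabilizer of ∞. -/
def That : Subgroup Mhat := Subgroup.closure {tau, nu}

/-- A Neumann subgroup of the extended modular group: a complement of T̂. -/
def IsNeumann (S : Subgroup Mhat) : Prop :=
  (S : Set Mhat) * (That : Set Mhat) = Set.univ ∧ S ⊓ That = ⊥

/-- The modular group PSL(2,ℤ), as the subgroup of PGL(2,ℤ) of classes of
matrices of determinant one. -/
def Msub : Subgroup Mhat :=
  Subgroup.map pr (MonoidHom.ker (Matrix.GeneralLinearGroup.det))

/-- `G` is a free product of `k` groups of order 2, `l` groups of order 3 and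
`m` infinite cyclic groups (cardinalities measured in `ℕ∞`). -/
def HasKLMStructure (G : Type) [Group G] (k l m : ℕ∞) : Prop :=
  ∃ (ι : Type) (H : ι → Type) (inst : ∀ i, Group (H i)),
    letI := inst
    Nonempty (G ≃* Monoid.CoprodI H) ∧
    (∀ i, Nonempty (H i ≃* Multiplicative (ZMod 2)) ∨
      Nonempty (H i ≃* Multiplicative (ZMod 3)) ∨
      Nonempty (H i ≃* Multiplicative ℤ)) ∧
    {i | Nonempty (H i ≃* Multiplicative (ZMod 2))}.encard = k ∧
    {i | Nonempty (H i ≃* Multiplicative (ZMod 3))}.encard = l ∧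
    {i | Nonempty (H i ≃* Multiplicative ℤ)}.encard = m

/-!
`PGL(2,ℤ)` acts on `ℚ ∪ {∞}`, and `T̂` fixes `∞`. Cut `ℚ` into the half-open intervals `[0, ∞)`,
`[-1, 0)`, `[-2, -1)`, …, each of them the image of `[0, ∞)` under an element of `PSL(2,ℤ)`. To each
interval one may assign, independently of the others, a cyclic group of order 2, 3 or `∞` whose
nontrivial elements map the complement of the interval into the interval. By ping-pong these
groups generate their free product `S`, and every nontrivial element of `S` moves `∞` into one of
the intervals, so `S ∩ T̂ = 1`.

The vertical Farey triangles `(∞, -n-1, -n)`, together with one further triangle beyond each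
interval whose group is not of order 2, represent all Farey triangles modulo `S`, and all their
vertices lie in the `S`-orbit of `∞`; hence `S T̂ = PGL(2,ℤ)`. The generators of infinite order
reverse orientation and the others preserve it. When `k + l + m = ∞` the kinds of the groups can be
distributed over the countably many intervals with the prescribed multiplicities.
-/

section PingPong

theorem eq_one_of_lift_smul_eq_self {ι α N : Type*} [Monoid N] [MulAction N α] {M : ι → Type*}
    [∀ i, Monoid (M i)] (f : ∀ i, M i →* N) {X : ι → Set α} {p : α}
    (hdisj : Pairwise (Function.onFun Disjoint X)) (hp : ∀ i, p ∉ X i)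
    (hX : ∀ i (h : M i), h ≠ 1 → ∀ x ∉ X i, f i h • x ∈ X i)
    {w : Monoid.CoprodI M} (hw : Monoid.CoprodI.lift f w • p = p) : w = 1 := by
  classical
  have mem_fst : ∀ v : Monoid.CoprodI.Word M, v = .empty ∨
      ∃ i, v.fstIdx = some i ∧ Monoid.CoprodI.lift f v.prod • p ∈ X i := by
    intro v
    induction v using Monoid.CoprodI.Word.consRecOn with
    | empty => exact .inl rfl
    | cons i m v hv hm ih =>
      refine .inr ⟨i, by simp, ?_⟩
      rw [Monoid.CoprodI.Word.prod_cons, map_mul, mul_smul, Monoid.CoprodI.lift_of]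
      refine hX i m hm _ ?_
      rcases ih with rfl | ⟨j, hj, hmem⟩
      · simpa using hp i
      · have hji : j ≠ i := fun h => hv (h ▸ hj)
        exact Set.disjoint_left.1 (hdisj hji) hmem
  rcases mem_fst (Monoid.CoprodI.Word.equiv w) with h | ⟨i, -, hmem⟩
  · rw [← Monoid.CoprodI.Word.equiv.symm_apply_apply w, h]
    exact Monoid.CoprodI.Word.prod_empty
  · have hprod : (Monoid.CoprodI.Word.equiv w).prod = w :=
      Monoid.CoprodI.Word.equiv.symm_apply_apply w
    rw [hprod, hw] at hmem
    exact absurd hmem (hp i)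

variable {G α : Type*} [Group G] [MulAction G α]

lemma pow_succ_smul_mem {g : G} {A B : Set α} (hAB : Disjoint A B)
    (hg : ∀ x ∉ A, g • x ∈ B) (n : ℕ) {x : α} (hx : x ∉ A) : g ^ (n + 1) • x ∈ B := by
  induction n with
  | zero => simpa using hg x hx
  | succ n ih =>
    rw [pow_succ', mul_smul]
    exact hg _ (Set.disjoint_right.1 hAB ih)

lemma zpow_smul_mem_union {g : G} {A B : Set α} (hAB : Disjoint A B)
    (hg : ∀ x ∉ A, g • x ∈ B) {n : ℤ} (hn : n ≠ 0) {x : α} (hx : x ∉ A ∪ B) :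
    g ^ n • x ∈ A ∪ B := by
  have hinv : ∀ y ∉ B, g⁻¹ • y ∈ A := fun y hy => by
    by_contra h
    exact hy (by simpa using hg _ h)
  rw [Set.mem_union, not_or] at hx
  obtain ⟨m, rfl | rfl⟩ := n.eq_nat_or_neg
  · obtain ⟨m, rfl⟩ := Nat.exists_eq_succ_of_ne_zero (by simpa using hn)
    rw [zpow_natCast]
    exact .inr (pow_succ_smul_mem hAB hg m hx.1)
  · obtain ⟨m, rfl⟩ := Nat.exists_eq_succ_of_ne_zero (by simpa using hn)
    rw [_root_.zpow_neg, zpow_natCast, ← inv_pow]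
    exact .inl (pow_succ_smul_mem hAB.symm hinv m hx.2)

end PingPong

lemma exists_fiber_encard_eq {κ : Type*} [Countable κ] (c : κ → ℕ∞) {t₀ : κ} (h : c t₀ = ⊤) :
    ∃ d : ℕ → κ, ∀ t, {i | d i = t}.encard = c t := by
  have hsets : ∀ t, ∃ A : Set ℕ, A.encard = c t := fun t => by
    obtain ⟨A, -, hA⟩ := Set.exists_subset_encard_eq (s := (Set.univ : Set ℕ)) (k := c t) (by simp)
    exact ⟨A, hA⟩
  choose A hA using hsets
  have : Infinite (A t₀) := Set.infinite_coe_iff.2 (Set.encard_eq_top_iff.1 ((hA t₀).trans h))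
  have : Infinite (Σ t, A t) := Infinite.of_injective (Sigma.mk t₀) sigma_mk_injective
  obtain ⟨e⟩ := nonempty_equiv_of_countable (α := ℕ) (β := Σ t, A t)
  refine ⟨fun i => (e i).1, fun t => ?_⟩
  have hfiber : {i | (e i).1 = t} = e.symm '' Set.range (Sigma.mk t) := by
    ext i
    simp [Set.range_sigmaMk]
  rw [hfiber, e.symm.injective.encard_image, ← Set.image_univ,
    sigma_mk_injective.encard_image, Set.encard_univ, ← hA t]
  rfl

lemma mul_mem_coe_mul_coe_of_mem_left {G : Type*} [Group G] {H K : Subgroup G} {s x : G}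
    (hs : s ∈ H) (hx : x ∈ (H : Set G) * (K : Set G)) : s * x ∈ (H : Set G) * (K : Set G) := by
  obtain ⟨a, ha, b, hb, rfl⟩ := hx
  exact ⟨s * a, mul_mem hs ha, b, hb, mul_assoc s a b⟩

lemma mul_mem_coe_mul_coe_of_mem_right {G : Type*} [Group G] {H K : Subgroup G} {x t : G}
    (hx : x ∈ (H : Set G) * (K : Set G)) (ht : t ∈ K) : x * t ∈ (H : Set G) * (K : Set G) := by
  obtain ⟨a, ha, b, hb, rfl⟩ := hx
  exact ⟨a, ha, b * t, mul_mem hb ht, (mul_assoc a b t).symm⟩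

section Relations

lemma pr_eq_pr_iff {g h : GL2Z} : pr g = pr h ↔ g = h ∨ g = -h := by
  have mem_pmI : ∀ {x : GL2Z}, x ∈ pmI ↔ x = 1 ∨ x = -1 := fun {x} => by
    refine ⟨fun hx => ?_, ?_⟩
    · obtain ⟨k, rfl⟩ := Subgroup.mem_zpowers_iff.1 hx
      rcases k.even_or_odd with hk | hk
      · exact .inl hk.neg_one_zpow
      · exact .inr hk.neg_one_zpow
    · rintro (rfl | rfl)
      exacts [one_mem _, Subgroup.mem_zpowers _]
  have hpr : pr h = pr g ↔ h⁻¹ * g ∈ pmI := QuotientGroup.eq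
  rw [eq_comm, hpr, mem_pmI, inv_mul_eq_one, inv_mul_eq_iff_eq_mul, mul_neg_one, eq_comm]

lemma omega_mul_omega : omega * omega = 1 :=
  pr_eq_pr_iff.2 (.inr (Units.ext (by decide)))

lemma omega_inv : omega⁻¹ = omega :=
  inv_eq_of_mul_eq_one_left omega_mul_omega

lemma nu_mul_omega : nu * omega = omega * nu :=
  pr_eq_pr_iff.2 (.inr (Units.ext (by decide)))

lemma omega_mul_tau : omega * tau = phi :=
  pr_eq_pr_iff.2 (.inl (Units.ext (by decide)))

lemma phi_pow_three : phi ^ 3 = 1 :=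
  pr_eq_pr_iff.2 (.inr (Units.ext (by decide)))

lemma phi_inv : phi⁻¹ = tau⁻¹ * omega := by
  rw [← omega_mul_tau, _root_.mul_inv_rev, omega_inv]

lemma phi_inv_eq_sq : phi⁻¹ = phi ^ 2 :=
  inv_eq_of_mul_eq_one_left (by rw [← pow_succ, phi_pow_three])

lemma phi_pow_cases (j : ℕ) : phi ^ j = 1 ∨ phi ^ j = phi ∨ phi ^ j = phi⁻¹ := by
  have h3 : j % 3 = 0 ∨ j % 3 = 1 ∨ j % 3 = 2 := by omega
  rw [pow_eq_pow_mod j phi_pow_three, phi_inv_eq_sq]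
  rcases h3 with h | h | h <;> simp [h]

end Relations

section Generation

lemma pr_mem_Msub_iff {g : GL2Z} : pr g ∈ Msub ↔ g.det = 1 := by
  refine ⟨?_, fun h => ⟨g, h, rfl⟩⟩
  rintro ⟨h, hh, hhg⟩
  rcases pr_eq_pr_iff.1 hhg with rfl | rfl
  · exact hh
  · simpa [Units.ext_iff, Matrix.det_neg] using hh

lemma tau_mem_Msub : tau ∈ Msub :=
  pr_mem_Msub_iff.2 (Units.ext (by decide))

lemma omega_mem_Msub : omega ∈ Msub :=
  pr_mem_Msub_iff.2 (Units.ext (by decide))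

lemma phi_mem_Msub : phi ∈ Msub :=
  omega_mul_tau ▸ mul_mem omega_mem_Msub tau_mem_Msub

lemma nu_notMem_Msub : nu ∉ Msub := fun h =>
  absurd (Units.ext_iff.1 (pr_mem_Msub_iff.1 h)) (by decide)

lemma Msub_le_closure : Msub ≤ Subgroup.closure {tau, omega} := by
  rintro _ ⟨g, hg, rfl⟩
  let s : SpecialLinearGroup (Fin 2) ℤ := ⟨g, Units.ext_iff.1 hg⟩
  have hs : s ∈ Subgroup.closure {ModularGroup.S, ModularGroup.T} := by
    rw [SpecialLinearGroup.SL2Z_generators]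
    trivial
  have hmap := Subgroup.mem_map_of_mem (pr.comp SpecialLinearGroup.toGL) hs
  rw [MonoidHom.map_closure, Set.image_pair] at hmap
  have hS : pr.comp SpecialLinearGroup.toGL ModularGroup.S = omega :=
    pr_eq_pr_iff.2 (.inl (Units.ext (by decide)))
  have hT : pr.comp SpecialLinearGroup.toGL ModularGroup.T = tau :=
    pr_eq_pr_iff.2 (.inl (Units.ext (by decide)))
  rw [hS, hT, Set.pair_comm] at hmap
  have hsg : SpecialLinearGroup.toGL s = g := Units.ext rfl
  rwa [← hsg]

lemma closure_tau_nu_omega : Subgroup.closure {tau, nu, omega} = ⊤ := by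
  have hMsub : Msub ≤ Subgroup.closure {tau, nu, omega} :=
    Msub_le_closure.trans (Subgroup.closure_mono (by simp [Set.insert_subset_iff]))
  have hnu : nu ∈ Subgroup.closure {tau, nu, omega} := Subgroup.subset_closure (by simp)
  refine eq_top_iff.2 fun x _ => ?_
  obtain ⟨g, rfl⟩ := QuotientGroup.mk'_surjective pmI x
  rcases Int.units_eq_one_or g.det with hg | hg
  · exact hMsub (pr_mem_Msub_iff.2 hg)
  · have hdet : (nuGL * g).det = 1 := by
      rw [map_mul, hg]
      exact Units.ext (by decide)
    have hmem : nu * pr g ∈ Subgroup.closure {tau, nu, omega} := by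
      rw [nu, ← map_mul]
      exact hMsub (pr_mem_Msub_iff.2 hdet)
    exact (Subgroup.mul_mem_cancel_left _ hnu).1 hmem

lemma tau_mem_That : tau ∈ That := Subgroup.subset_closure (by simp)

lemma nu_mem_That : nu ∈ That := Subgroup.subset_closure (by simp)

end Generation

section Action

open OnePoint

/-- The action of `PGL(2,ℤ)` on the projective line `ℚ ∪ {∞}` by Möbius transformations. -/
def mobius : Mhat →* Equiv.Perm (OnePoint ℚ) :=
  QuotientGroup.lift pmI
    ((MulAction.toPermHom (GL (Fin 2) ℚ) (OnePoint ℚ)).comp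
      (GeneralLinearGroup.map (Int.castRingHom ℚ)))
    (by
      refine (Subgroup.zpowers_le (H := MonoidHom.ker _)).2 (Equiv.ext fun x => ?_)
      cases x with
      | infty => simp [smul_infty_eq_ite]
      | coe x => simp [smul_some_eq_ite])

instance : MulAction Mhat (OnePoint ℚ) := MulAction.compHom _ mobius

lemma pr_smul (g : GL2Z) (x : OnePoint ℚ) :
    pr g • x = GeneralLinearGroup.map (Int.castRingHom ℚ) g • x := rfl

lemma tau_smul_infty : tau • (∞ : OnePoint ℚ) = ∞ := by
  simp [tau, pr_smul, smul_infty_eq_ite, tauGL]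

lemma tau_smul_coe (x : ℚ) : tau • (x : OnePoint ℚ) = ↑(x + 1) := by
  simp [tau, pr_smul, smul_some_eq_ite, tauGL]

lemma nu_smul_infty : nu • (∞ : OnePoint ℚ) = ∞ := by
  simp [nu, pr_smul, smul_infty_eq_ite, nuGL]

lemma omega_smul_infty : omega • (∞ : OnePoint ℚ) = ↑(0 : ℚ) := by
  simp [omega, pr_smul, smul_infty_eq_ite, omegaGL]

lemma omega_smul_zero : omega • ((0 : ℚ) : OnePoint ℚ) = ∞ := by
  simp [omega, pr_smul, smul_some_eq_ite, omegaGL]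

lemma omega_smul_coe {x : ℚ} (hx : x ≠ 0) : omega • (x : OnePoint ℚ) = ↑(-x⁻¹) := by
  simp [omega, pr_smul, smul_some_eq_ite, omegaGL, hx, neg_div]

lemma tau_inv_pow_smul_coe (n : ℕ) (x : ℚ) : tau⁻¹ ^ n • (x : OnePoint ℚ) = ↑(x - n) := by
  rw [inv_pow, inv_smul_eq_iff]
  induction n generalizing x with
  | zero => simp
  | succ n ih =>
    rw [pow_succ', mul_smul, show x - (n + 1 : ℕ) = x - 1 - n by push_cast; ring, ← ih (x - 1),
      tau_smul_coe, sub_add_cancel]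

lemma That_le_stabilizer_infty : That ≤ MulAction.stabilizer Mhat (∞ : OnePoint ℚ) := by
  rw [That, Subgroup.closure_le, Set.insert_subset_iff, Set.singleton_subset_iff]
  exact ⟨tau_smul_infty, nu_smul_infty⟩

end Action

section PingPongOnCusps

open OnePoint

/-- The nonnegative rationals inside the projective line: the table on which the local generators
play ping-pong. -/
def nonnegCusps : Set (OnePoint ℚ) := (↑) '' Set.Ici (0 : ℚ)

lemma coe_mem_nonnegCusps {x : ℚ} : (x : OnePoint ℚ) ∈ nonnegCusps ↔ 0 ≤ x := by
  simp [nonnegCusps]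

lemma infty_notMem_nonnegCusps : (∞ : OnePoint ℚ) ∉ nonnegCusps := by
  simp [nonnegCusps]

lemma omega_smul_mem_nonnegCusps {x : OnePoint ℚ} (hx : x ∉ nonnegCusps) :
    omega • x ∈ nonnegCusps := by
  cases x with
  | infty => simp [omega_smul_infty, coe_mem_nonnegCusps]
  | coe x =>
    rw [coe_mem_nonnegCusps, not_le] at hx
    rw [omega_smul_coe hx.ne, coe_mem_nonnegCusps, neg_nonneg]
    exact inv_nonpos.2 hx.le

lemma omega_smul_notMem_nonnegCusps {x : OnePoint ℚ} (hx : x ∈ nonnegCusps) :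
    omega • x ∉ nonnegCusps := by
  obtain ⟨x, hx : 0 ≤ x, rfl⟩ := hx
  rcases hx.eq_or_lt with rfl | hx
  · simpa [omega_smul_zero] using infty_notMem_nonnegCusps
  · simpa [omega_smul_coe hx.ne', coe_mem_nonnegCusps] using hx

lemma phi_smul_coe {x : ℚ} (hx : 0 ≤ x) : phi • (x : OnePoint ℚ) = ↑(-(x + 1)⁻¹) := by
  rw [← omega_mul_tau, mul_smul, tau_smul_coe, omega_smul_coe (by positivity)]

lemma phi_smul_notMem_nonnegCusps {x : OnePoint ℚ} (hx : x ∈ nonnegCusps) :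
    phi • x ∉ nonnegCusps := by
  obtain ⟨x, hx : 0 ≤ x, rfl⟩ := hx
  rw [phi_smul_coe hx, coe_mem_nonnegCusps, neg_nonneg, not_le]
  positivity

lemma phi_sq_smul_notMem_nonnegCusps {x : OnePoint ℚ} (hx : x ∈ nonnegCusps) :
    phi ^ 2 • x ∉ nonnegCusps := by
  intro h
  apply phi_smul_notMem_nonnegCusps h
  rwa [← mul_smul, ← pow_succ', phi_pow_three, one_smul]

/-- The three isomorphism types of free factors: order 2, order 3 and infinite cyclic. -/
inductive FactorKind
  | two
  | three
  | infinite

namespace FactorKind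

/-- The order of the factor, with `0` standing for infinite order as in `orderOf`. -/
def order : FactorKind → ℕ
  | two => 2
  | three => 3
  | infinite => 0

lemma order_injective : Function.Injective order := by
  rintro ⟨⟩ ⟨⟩ h <;> first | rfl | cases h

instance : Countable FactorKind := order_injective.countable

/-- An element of the given order whose nontrivial powers map the complement of `nonnegCusps` into
`nonnegCusps`. The third one is `x ↦ (x - 1) / (x - 2)`. -/
def localGen : FactorKind → Mhat
  | two => omega
  | three => omega * phi * omega
  | infinite => omega * tau⁻¹ * nu * omega * tau⁻¹

lemma localGen_three_zpow (n : ℤ) : three.localGen ^ n = omega * phi ^ n * omega := by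
  simpa only [localGen, omega_inv] using conj_zpow (i := n) (a := omega) (b := phi)

lemma localGen_infinite_smul_mem {x : OnePoint ℚ} (hx : x ∉ (↑) '' Set.Ioi (1 : ℚ)) :
    infinite.localGen • x ∈ ((↑) '' Set.Icc (0 : ℚ) 1 : Set (OnePoint ℚ)) := by
  have hpr : infinite.localGen = pr ⟨!![1, -1; 1, -2], !![2, -1; 1, -1], by decide, by decide⟩ :=
    pr_eq_pr_iff.2 (.inr (Units.ext (by decide)))
  cases x with
  | infty => simp [hpr, pr_smul, smul_infty_eq_ite]
  | coe x =>
    have hx1 : x ≤ 1 := by simpa using hx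
    have hx2 : x + -2 < 0 := by linarith
    refine ⟨(x + -1) / (x + -2), ⟨div_nonneg_of_nonpos (by linarith) hx2.le, ?_⟩, ?_⟩
    · rw [div_le_one_of_neg hx2]
      linarith
    · simp [hpr, pr_smul, smul_some_eq_ite, hx2.ne]

lemma localGen_infinite_zpow_smul_mem {n : ℤ} (hn : n ≠ 0) {x : OnePoint ℚ}
    (hx : x ∉ nonnegCusps) : infinite.localGen ^ n • x ∈ nonnegCusps := by
  have hunion : nonnegCusps = (↑) '' Set.Ioi (1 : ℚ) ∪ (↑) '' Set.Icc (0 : ℚ) 1 := by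
    rw [← Set.image_union, Set.union_comm, Set.Icc_union_Ioi_eq_Ici zero_le_one]
    rfl
  have hdisj : Disjoint ((↑) '' Set.Ioi (1 : ℚ)) ((↑) '' Set.Icc (0 : ℚ) 1 : Set (OnePoint ℚ)) :=
    (Set.disjoint_image_iff OnePoint.coe_injective).2
      (Set.disjoint_left.2 fun _ h h' => h'.2.not_gt h)
  rw [hunion] at hx ⊢
  exact zpow_smul_mem_union hdisj (fun _ => localGen_infinite_smul_mem) hn hx

lemma localGen_pow_order : ∀ t : FactorKind, t.localGen ^ t.order = 1
  | two => by rw [order, localGen, sq, omega_mul_omega]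
  | three => by
    rw [order, ← zpow_natCast, localGen_three_zpow, zpow_natCast, phi_pow_three, mul_one,
      omega_mul_omega]
  | infinite => pow_zero _

lemma localGen_zpow_smul_mem {t : FactorKind} {n : ℤ} (hn : t.localGen ^ n ≠ 1) {x : OnePoint ℚ}
    (hx : x ∉ nonnegCusps) : t.localGen ^ n • x ∈ nonnegCusps := by
  rw [zpow_eq_zpow_emod' n t.localGen_pow_order] at hn ⊢
  cases t with
  | two =>
    rcases Int.emod_two_eq_zero_or_one n with h | h
    · exact absurd (by simp [order, h]) hn
    · simpa [order, h, localGen] using omega_smul_mem_nonnegCusps hx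
  | three =>
    have hx' := omega_smul_mem_nonnegCusps hx
    have h3 : n % 3 = 0 ∨ n % 3 = 1 ∨ n % 3 = 2 := by omega
    rw [localGen_three_zpow, mul_smul, mul_smul]
    rcases h3 with h | h | h
    · exact absurd (by simp [order, h]) hn
    · simpa [order, h] using omega_smul_mem_nonnegCusps (phi_smul_notMem_nonnegCusps hx')
    · simpa [order, h] using omega_smul_mem_nonnegCusps (phi_sq_smul_notMem_nonnegCusps hx')
  | infinite =>
    have h0 : n % infinite.order ≠ 0 := fun h => hn (by rw [h, zpow_zero])
    exact localGen_infinite_zpow_smul_mem h0 hx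

lemma orderOf_localGen (t : FactorKind) : orderOf t.localGen = t.order := by
  have hzero : ((0 : ℚ) : OnePoint ℚ) ∈ nonnegCusps := coe_mem_nonnegCusps.2 le_rfl
  have homega : omega ≠ 1 := fun h => omega_smul_notMem_nonnegCusps hzero (by rwa [h, one_smul])
  have hphi : phi ≠ 1 := fun h => phi_smul_notMem_nonnegCusps hzero (by rwa [h, one_smul])
  cases t with
  | two => exact orderOf_eq_prime (p := 2) two.localGen_pow_order homega
  | three =>
    refine orderOf_eq_prime (p := 3) three.localGen_pow_order fun h => hphi ?_
    have hconj : three.localGen = omega * phi * omega⁻¹ := by rw [omega_inv, localGen]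
    rwa [hconj, conj_eq_one_iff] at h
  | infinite =>
    refine orderOf_eq_zero_iff'.2 fun n hn h => infty_notMem_nonnegCusps ?_
    have hmem := localGen_infinite_zpow_smul_mem (Int.natCast_ne_zero.2 hn.ne')
      infty_notMem_nonnegCusps
    rwa [zpow_natCast, h, one_smul] at hmem

lemma localGen_mem_Msub_iff : ∀ t : FactorKind, t.localGen ∈ Msub ↔ t ≠ infinite
  | two => by simpa [localGen] using omega_mem_Msub
  | three => by
    simpa [localGen] using mul_mem (mul_mem omega_mem_Msub phi_mem_Msub) omega_mem_Msub
  | infinite => by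
    have htau := inv_mem tau_mem_Msub
    rw [localGen, Subgroup.mul_mem_cancel_right _ htau,
      Subgroup.mul_mem_cancel_right _ omega_mem_Msub,
      Subgroup.mul_mem_cancel_left _ (mul_mem omega_mem_Msub htau)]
    simpa using nu_notMem_Msub

end FactorKind

/-- Elements carrying `nonnegCusps` to the disjoint gates `[0, ∞)`, `[-1, 0)`, `[-2, -1)`, … -/
def gate : ℕ → Mhat
  | 0 => 1
  | n + 1 => tau⁻¹ ^ n * phi

lemma gate_mem_Msub : ∀ i, gate i ∈ Msub
  | 0 => one_mem _
  | _ + 1 => mul_mem (pow_mem (inv_mem tau_mem_Msub) _) phi_mem_Msub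

lemma exists_ceil_neg_eq_of_mem_gate_smul {i : ℕ} {y : OnePoint ℚ}
    (hy : y ∈ gate i • nonnegCusps) : ∃ x : ℚ, y = x ∧ ⌈-x⌉₊ = i := by
  obtain ⟨_, ⟨x, hx : 0 ≤ x, rfl⟩, rfl⟩ := hy
  cases i with
  | zero => exact ⟨x, one_smul _ _, by simpa using hx⟩
  | succ n =>
    refine ⟨-(x + 1)⁻¹ - n, ?_, ?_⟩
    · simp only [gate, mul_smul, phi_smul_coe hx, tau_inv_pow_smul_coe]
    · have hpos : 0 < (x + 1)⁻¹ := by positivity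
      have hle : (x + 1)⁻¹ ≤ 1 := inv_le_one_of_one_le₀ (by linarith)
      rw [Nat.ceil_eq_iff n.succ_ne_zero]
      push_cast
      exact ⟨by linarith only [hpos], by linarith only [hle]⟩

lemma pairwise_disjoint_gate_smul :
    Pairwise (Function.onFun Disjoint fun i => gate i • nonnegCusps) := by
  intro i j hij
  refine Set.disjoint_left.2 fun y hi hj => hij ?_
  obtain ⟨x, rfl, rfl⟩ := exists_ceil_neg_eq_of_mem_gate_smul hi
  obtain ⟨x', hx, rfl⟩ := exists_ceil_neg_eq_of_mem_gate_smul hj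
  rw [OnePoint.coe_injective hx]

lemma infty_notMem_gate_smul (i : ℕ) : (∞ : OnePoint ℚ) ∉ gate i • nonnegCusps := fun h =>
  let ⟨_, hx, _⟩ := exists_ceil_neg_eq_of_mem_gate_smul h
  infty_ne_coe _ hx

end PingPongOnCusps

section FreeProduct

open OnePoint

variable (d : ℕ → FactorKind)

/-- The generator of the `i`-th free factor: the local generator of kind `d i`, moved to the
`i`-th gate. -/
def blockGen (i : ℕ) : Mhat := gate i * (d i).localGen * (gate i)⁻¹

/-- The canonical map to `PGL(2,ℤ)` from the free product of the cyclic groups generated by the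
`blockGen d i`. -/
def factorsHom : Monoid.CoprodI (fun i => Subgroup.zpowers (blockGen d i)) →* Mhat :=
  Monoid.CoprodI.lift fun i => (Subgroup.zpowers (blockGen d i)).subtype

/-- The Neumann subgroup whose `i`-th free factor has kind `d i`. -/
def neumannSubgroup : Subgroup Mhat := (factorsHom d).range

lemma neumannSubgroup_eq_iSup : neumannSubgroup d = ⨆ i, Subgroup.zpowers (blockGen d i) := by
  simp [neumannSubgroup, factorsHom, Monoid.CoprodI.range_eq_iSup]

lemma blockGen_mem_neumannSubgroup (i : ℕ) : blockGen d i ∈ neumannSubgroup d := by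
  rw [neumannSubgroup_eq_iSup]
  exact Subgroup.mem_iSup_of_mem i (Subgroup.mem_zpowers _)

lemma blockGen_zpow (i : ℕ) (n : ℤ) :
    blockGen d i ^ n = gate i * (d i).localGen ^ n * (gate i)⁻¹ :=
  conj_zpow

lemma gate_mul_localGen_zpow (i : ℕ) (n : ℤ) :
    gate i * (d i).localGen ^ n = blockGen d i ^ n * gate i := by
  rw [blockGen_zpow, inv_mul_cancel_right]

lemma orderOf_blockGen (i : ℕ) : orderOf (blockGen d i) = (d i).order := by
  rw [← FactorKind.orderOf_localGen]
  exact (MulAut.conj (gate i)).orderOf_eq (d i).localGen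

lemma blockGen_zpow_smul_mem {i : ℕ} {n : ℤ} (hn : blockGen d i ^ n ≠ 1) {x : OnePoint ℚ}
    (hx : x ∉ gate i • nonnegCusps) : blockGen d i ^ n • x ∈ gate i • nonnegCusps := by
  rw [blockGen_zpow] at hn ⊢
  rw [Set.mem_smul_set_iff_inv_smul_mem] at hx
  rw [mul_smul, mul_smul, Set.smul_mem_smul_set_iff]
  exact FactorKind.localGen_zpow_smul_mem (fun h => hn (by simp [h])) hx

lemma eq_one_of_factorsHom_smul_infty
    {w : Monoid.CoprodI fun i => Subgroup.zpowers (blockGen d i)}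
    (hw : factorsHom d w • (∞ : OnePoint ℚ) = ∞) : w = 1 := by
  refine eq_one_of_lift_smul_eq_self _ pairwise_disjoint_gate_smul infty_notMem_gate_smul ?_ hw
  rintro i ⟨_, n, rfl⟩ hn x hx
  exact blockGen_zpow_smul_mem d (fun h => hn (Subtype.ext h)) hx

lemma factorsHom_injective : Function.Injective (factorsHom d) :=
  (injective_iff_map_eq_one _).2 fun w hw =>
    eq_one_of_factorsHom_smul_infty d (by rw [hw, one_smul])

lemma neumannSubgroup_inf_That : neumannSubgroup d ⊓ That = ⊥ := by
  rw [eq_bot_iff]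
  rintro _ ⟨⟨w, rfl⟩, hw⟩
  rw [eq_one_of_factorsHom_smul_infty d (That_le_stabilizer_infty hw), map_one]
  exact one_mem _

lemma blockGen_mem_Msub_iff (i : ℕ) : blockGen d i ∈ Msub ↔ d i ≠ .infinite := by
  rw [blockGen, Subgroup.mul_mem_cancel_right _ (inv_mem (gate_mem_Msub i)),
    Subgroup.mul_mem_cancel_left _ (gate_mem_Msub i), FactorKind.localGen_mem_Msub_iff]

lemma neumannSubgroup_le_Msub_iff : neumannSubgroup d ≤ Msub ↔ ∀ i, d i ≠ .infinite := by
  simp only [neumannSubgroup_eq_iSup, iSup_le_iff, Subgroup.zpowers_le, blockGen_mem_Msub_iff]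

lemma nonempty_zpowers_blockGen_mulEquiv_iff (i : ℕ) (t : FactorKind) :
    Nonempty (Subgroup.zpowers (blockGen d i) ≃* Multiplicative (ZMod t.order)) ↔ d i = t := by
  have hcard : Nat.card (Subgroup.zpowers (blockGen d i)) = (d i).order := by
    rw [Nat.card_zpowers, orderOf_blockGen]
  refine ⟨fun ⟨e⟩ => FactorKind.order_injective ?_, ?_⟩
  · rw [← hcard, Nat.card_congr e.toEquiv, Nat.card_congr Multiplicative.toAdd, Nat.card_zmod]
  · rintro rfl
    rw [← hcard]
    exact ⟨(zmodCyclicMulEquiv inferInstance).symm⟩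

lemma hasKLMStructure_neumannSubgroup :
    HasKLMStructure (neumannSubgroup d) {i | d i = .two}.encard {i | d i = .three}.encard
      {i | d i = .infinite}.encard := by
  have hiff := nonempty_zpowers_blockGen_mulEquiv_iff d
  refine ⟨ℕ, fun i => Subgroup.zpowers (blockGen d i), inferInstance,
    ⟨(MonoidHom.ofInjective (factorsHom_injective d)).symm⟩, fun i => ?_, ?_, ?_, ?_⟩
  · cases h : d i with
    | two => exact .inl ((hiff i .two).2 h)
    | three => exact .inr (.inl ((hiff i .three).2 h))
    | infinite => exact .inr (.inr ((hiff i .infinite).2 h))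
  · exact congrArg Set.encard (Set.ext fun i => hiff i .two)
  · exact congrArg Set.encard (Set.ext fun i => hiff i .three)
  · exact congrArg Set.encard (Set.ext fun i => hiff i .infinite)

end FreeProduct

section FareyTriangles

/-- The reflection `ν ω`, which normalizes `⟨φ⟩` and commutes with `ω`. -/
def kappa : Mhat := nu * omega

lemma kappa_mul_kappa : kappa * kappa = 1 :=
  pr_eq_pr_iff.2 (.inl (Units.ext (by decide)))

lemma kappa_mul_omega : kappa * omega = omega * kappa := by
  rw [kappa, nu_mul_omega, mul_assoc, nu_mul_omega]

lemma kappa_mul_phi : kappa * phi = phi ^ 2 * kappa :=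
  pr_eq_pr_iff.2 (.inr (Units.ext (by decide)))

lemma kappa_eq_phi_mul : kappa = phi * (tau⁻¹ * nu) :=
  pr_eq_pr_iff.2 (.inr (Units.ext (by decide)))

/-- The stabilizer of the Farey triangle `(∞, -1, 0)`. -/
def triangleStabilizer : Subgroup Mhat := Subgroup.closure {phi, kappa}

lemma phi_mem_triangleStabilizer : phi ∈ triangleStabilizer := Subgroup.subset_closure (by simp)

lemma kappa_mem_triangleStabilizer : kappa ∈ triangleStabilizer := Subgroup.subset_closure (by simp)

lemma exists_eq_phi_pow_or_of_mem_triangleStabilizer {x : Mhat} (hx : x ∈ triangleStabilizer) :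
    ∃ j : ℕ, x = phi ^ j ∨ x = phi ^ j * kappa := by
  have mul_phi : ∀ x : Mhat, (∃ j : ℕ, x = phi ^ j ∨ x = phi ^ j * kappa) →
      ∃ j : ℕ, x * phi = phi ^ j ∨ x * phi = phi ^ j * kappa := by
    rintro _ ⟨j, rfl | rfl⟩
    · exact ⟨j + 1, .inl (pow_succ phi j).symm⟩
    · exact ⟨j + 2, .inr (by rw [mul_assoc, kappa_mul_phi, pow_add, mul_assoc])⟩
  have mul_kappa : ∀ x : Mhat, (∃ j : ℕ, x = phi ^ j ∨ x = phi ^ j * kappa) →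
      ∃ j : ℕ, x * kappa = phi ^ j ∨ x * kappa = phi ^ j * kappa := by
    rintro _ ⟨j, rfl | rfl⟩
    · exact ⟨j, .inr rfl⟩
    · exact ⟨j, .inl (by rw [mul_assoc, kappa_mul_kappa, mul_one])⟩
  induction hx using Subgroup.closure_induction_right with
  | one => exact ⟨0, .inl rfl⟩
  | mul_right x _ _ hy ih =>
    rcases hy with rfl | rfl
    exacts [mul_phi x ih, mul_kappa x ih]
  | mul_inv_cancel x _ _ hy ih =>
    rcases hy with rfl | rfl
    · rw [phi_inv_eq_sq, sq, ← mul_assoc]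
      exact mul_phi _ (mul_phi x ih)
    · rw [inv_eq_of_mul_eq_one_left kappa_mul_kappa]
      exact mul_kappa x ih

lemma closure_insert_omega_triangleStabilizer :
    Subgroup.closure (insert omega (triangleStabilizer : Set Mhat)) = ⊤ := by
  have hsub := Subgroup.subset_closure (k := insert omega (triangleStabilizer : Set Mhat))
  have homega := hsub (Set.mem_insert _ _)
  have hphi := hsub (Set.mem_insert_of_mem _ phi_mem_triangleStabilizer)
  have hkappa := hsub (Set.mem_insert_of_mem _ kappa_mem_triangleStabilizer)
  have htau : tau = omega * phi := pr_eq_pr_iff.2 (.inr (Units.ext (by decide)))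
  have hnu : nu = kappa * omega := pr_eq_pr_iff.2 (.inr (Units.ext (by decide)))
  rw [eq_top_iff, ← closure_tau_nu_omega, Subgroup.closure_le]
  rintro _ (rfl | rfl | rfl)
  · exact htau ▸ mul_mem homega hphi
  · exact hnu ▸ mul_mem hkappa homega
  · exact homega

/-- Representatives of the Farey triangles modulo `neumannSubgroup d`: the triangles
`(∞, -n-1, -n)` and, unless `d i` is `two`, the triangle across the `i`-th gate.
A triangle is encoded by an element taking `(∞, -1, 0)` to it. -/
def triangleReps (d : ℕ → FactorKind) : Set Mhat :=
  {r | (∃ n : ℕ, r = tau⁻¹ ^ n) ∨ ∃ i, d i ≠ .two ∧ r = gate i * omega}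

/-- The elements of `PGL(2,ℤ)` taking `(∞, -1, 0)` to a translate of one of the `triangleReps d`. -/
def triangleTranslates (d : ℕ → FactorKind) : Set Mhat :=
  (neumannSubgroup d : Set Mhat) * triangleReps d * (triangleStabilizer : Set Mhat)

variable {d : ℕ → FactorKind}

lemma mul_mem_triangleTranslates {s g : Mhat} (hs : s ∈ neumannSubgroup d)
    (hg : g ∈ triangleTranslates d) : s * g ∈ triangleTranslates d := by
  obtain ⟨_, ⟨s', hs', r, hr, rfl⟩, x, hx, rfl⟩ := hg
  exact ⟨_, ⟨s * s', mul_mem hs hs', r, hr, rfl⟩, x, hx, by simp only [mul_assoc]⟩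

lemma mul_mem_triangleTranslates_of_mem_triangleStabilizer {g x : Mhat}
    (hg : g ∈ triangleTranslates d) (hx : x ∈ triangleStabilizer) :
    g * x ∈ triangleTranslates d := by
  obtain ⟨a, ha, y, hy, rfl⟩ := hg
  exact ⟨a, ha, y * x, mul_mem hy hx, (mul_assoc a y x).symm⟩

lemma triangleReps_subset : triangleReps d ⊆ triangleTranslates d := fun r hr =>
  ⟨r, ⟨1, one_mem _, r, hr, one_mul r⟩, 1, one_mem _, mul_one r⟩

lemma tau_inv_pow_mem_triangleTranslates (n : ℕ) : tau⁻¹ ^ n ∈ triangleTranslates d :=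
  triangleReps_subset (.inl ⟨n, rfl⟩)

lemma gate_mem_triangleTranslates : ∀ i, gate i ∈ triangleTranslates d
  | 0 => tau_inv_pow_mem_triangleTranslates 0
  | n + 1 => mul_mem_triangleTranslates_of_mem_triangleStabilizer
      (tau_inv_pow_mem_triangleTranslates n) phi_mem_triangleStabilizer

lemma gate_mul_localGen_zpow_mul_mem_triangleTranslates {i : ℕ} {y : Mhat}
    (hy : gate i * y ∈ triangleTranslates d) (n : ℤ) :
    gate i * ((d i).localGen ^ n * y) ∈ triangleTranslates d := by
  rw [← mul_assoc, gate_mul_localGen_zpow, mul_assoc]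
  exact mul_mem_triangleTranslates (zpow_mem (blockGen_mem_neumannSubgroup d i) n) hy

lemma gate_mul_localGen_zpow_mem_triangleTranslates (i : ℕ) (n : ℤ) :
    gate i * (d i).localGen ^ n ∈ triangleTranslates d := by
  have hgate : gate i * 1 ∈ triangleTranslates d := by
    rw [mul_one]
    exact gate_mem_triangleTranslates i
  simpa only [mul_one] using gate_mul_localGen_zpow_mul_mem_triangleTranslates hgate n

lemma gate_mul_omega_mem_triangleTranslates (i : ℕ) : gate i * omega ∈ triangleTranslates d := by
  by_cases hi : d i = .two
  · have homega : omega = (d i).localGen ^ (1 : ℤ) := by rw [hi, zpow_one, FactorKind.localGen]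
    rw [homega]
    exact gate_mul_localGen_zpow_mem_triangleTranslates i 1
  · exact triangleReps_subset (.inr ⟨i, hi, rfl⟩)

lemma gate_mul_omega_mul_mem_triangleTranslates (i : ℕ) {x : Mhat} (hx : x ∈ triangleStabilizer) :
    gate i * (omega * x) ∈ triangleTranslates d := by
  rw [← mul_assoc]
  exact mul_mem_triangleTranslates_of_mem_triangleStabilizer
    (gate_mul_omega_mem_triangleTranslates i) hx

lemma tau_inv_pow_mul_phi_pow_mul_omega_mem (n j : ℕ) :
    tau⁻¹ ^ n * phi ^ j * omega ∈ triangleTranslates d := by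
  rcases phi_pow_cases j with h | h | h <;> rw [h]
  · cases n with
    | zero => simpa [gate] using gate_mul_omega_mem_triangleTranslates (d := d) 0
    | succ n =>
      rw [mul_one, pow_succ, mul_assoc, ← phi_inv]
      exact mul_mem_triangleTranslates_of_mem_triangleStabilizer
        (tau_inv_pow_mem_triangleTranslates n) (inv_mem phi_mem_triangleStabilizer)
  · exact gate_mul_omega_mem_triangleTranslates (n + 1)
  · rw [phi_inv, mul_assoc, mul_assoc, omega_mul_omega, mul_one, ← pow_succ]
    exact tau_inv_pow_mem_triangleTranslates (n + 1)

lemma gate_mul_omega_mul_phi_pow_mul_omega_mem_of_infinite {i : ℕ} (hi : d i = .infinite) (j : ℕ) :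
    gate i * (omega * phi ^ j * omega) ∈ triangleTranslates d := by
  have hphi := phi_mem_triangleStabilizer
  have hkappa := kappa_mem_triangleStabilizer
  rcases phi_pow_cases j with h | h | h <;> rw [h]
  · simpa only [mul_one, omega_mul_omega] using gate_mem_triangleTranslates i
  · have hu : omega * phi * omega =
        FactorKind.infinite.localGen ^ (-1 : ℤ) * (omega * (phi⁻¹ * kappa)) :=
      pr_eq_pr_iff.2 (.inr (Units.ext (by decide)))
    rw [hu, ← hi]
    exact gate_mul_localGen_zpow_mul_mem_triangleTranslates
      (gate_mul_omega_mul_mem_triangleTranslates i (mul_mem (inv_mem hphi) hkappa)) (-1)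
  · have hu : omega * phi⁻¹ * omega =
        FactorKind.infinite.localGen ^ (1 : ℤ) * (omega * (phi * kappa)) :=
      pr_eq_pr_iff.2 (.inr (Units.ext (by decide)))
    rw [hu, ← hi]
    exact gate_mul_localGen_zpow_mul_mem_triangleTranslates
      (gate_mul_omega_mul_mem_triangleTranslates i (mul_mem hphi hkappa)) 1

lemma gate_mul_omega_mul_phi_pow_mul_omega_mem {i : ℕ} (hi : d i ≠ .two) (j : ℕ) :
    gate i * omega * phi ^ j * omega ∈ triangleTranslates d := by
  rw [mul_assoc (gate i), mul_assoc (gate i)]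
  cases h : d i with
  | two => contradiction
  | three =>
    rw [← zpow_natCast, ← FactorKind.localGen_three_zpow, ← h]
    exact gate_mul_localGen_zpow_mem_triangleTranslates i j
  | infinite => exact gate_mul_omega_mul_phi_pow_mul_omega_mem_of_infinite h j

lemma mul_omega_mem_triangleTranslates {g : Mhat} (hg : g ∈ triangleTranslates d) :
    g * omega ∈ triangleTranslates d := by
  obtain ⟨_, ⟨s, hs, r, hr, rfl⟩, x, hx, rfl⟩ := hg
  obtain ⟨j, hj⟩ := exists_eq_phi_pow_or_of_mem_triangleStabilizer hx
  have key : s * (r * phi ^ j * omega) ∈ triangleTranslates d := by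
    refine mul_mem_triangleTranslates hs ?_
    rcases hr with ⟨n, rfl⟩ | ⟨i, hi, rfl⟩
    exacts [tau_inv_pow_mul_phi_pow_mul_omega_mem n j,
      gate_mul_omega_mul_phi_pow_mul_omega_mem hi j]
  rcases hj with rfl | rfl
  · simpa only [mul_assoc] using key
  · simpa only [mul_assoc, kappa_mul_omega] using
      mul_mem_triangleTranslates_of_mem_triangleStabilizer key kappa_mem_triangleStabilizer

lemma triangleTranslates_eq_univ : triangleTranslates d = Set.univ := by
  refine Set.eq_univ_of_forall fun g => ?_
  have hg : g ∈ Subgroup.closure (insert omega (triangleStabilizer : Set Mhat)) :=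
    closure_insert_omega_triangleStabilizer ▸ Subgroup.mem_top g
  induction hg using Subgroup.closure_induction_right with
  | one => exact tau_inv_pow_mem_triangleTranslates 0
  | mul_right _ _ _ hy ih =>
    rcases hy with rfl | hy
    exacts [mul_omega_mem_triangleTranslates ih,
      mul_mem_triangleTranslates_of_mem_triangleStabilizer ih hy]
  | mul_inv_cancel _ _ _ hy ih =>
    rcases hy with rfl | hy
    · rw [omega_inv]
      exact mul_omega_mem_triangleTranslates ih
    · exact mul_mem_triangleTranslates_of_mem_triangleStabilizer ih (inv_mem hy)

end FareyTriangles

section Cusps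

lemma exists_omega_eq_localGen_zpow_mul :
    ∀ t : FactorKind, ∃ n : ℤ, ∃ y ∈ That, omega = t.localGen ^ n * y
  | .two => ⟨1, 1, one_mem _, by rw [zpow_one, mul_one, FactorKind.localGen]⟩
  | .three => ⟨2, tau, tau_mem_That, pr_eq_pr_iff.2 (.inl (Units.ext (by decide)))⟩
  | .infinite => ⟨2, tau ^ 3, pow_mem tau_mem_That 3,
      pr_eq_pr_iff.2 (.inr (Units.ext (by decide)))⟩

lemma exists_omega_mul_phi_inv_eq_localGen_mul {t : FactorKind} (ht : t ≠ .two) :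
    ∃ y ∈ That, omega * phi⁻¹ = t.localGen * y := by
  cases t with
  | two => contradiction
  | three => exact ⟨tau, tau_mem_That, pr_eq_pr_iff.2 (.inr (Units.ext (by decide)))⟩
  | infinite =>
    exact ⟨tau * nu, mul_mem tau_mem_That nu_mem_That,
      pr_eq_pr_iff.2 (.inl (Units.ext (by decide)))⟩

variable {d : ℕ → FactorKind}

local notation "cover" => (neumannSubgroup d : Set Mhat) * (That : Set Mhat)

lemma gate_mul_localGen_zpow_mul_mem {i : ℕ} (hi : gate i ∈ cover) (n : ℤ) {y : Mhat}
    (hy : y ∈ That) : gate i * ((d i).localGen ^ n * y) ∈ cover := by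
  rw [← mul_assoc, gate_mul_localGen_zpow, mul_assoc]
  exact mul_mem_coe_mul_coe_of_mem_left (zpow_mem (blockGen_mem_neumannSubgroup d i) n)
    (mul_mem_coe_mul_coe_of_mem_right hi hy)

lemma gate_mul_omega_mem {i : ℕ} (hi : gate i ∈ cover) : gate i * omega ∈ cover := by
  obtain ⟨n, y, hy, h⟩ := exists_omega_eq_localGen_zpow_mul (d i)
  rw [h]
  exact gate_mul_localGen_zpow_mul_mem hi n hy

lemma exists_gate_succ_eq : ∀ i, ∃ y ∈ That, gate (i + 1) = gate i * omega * y
  | 0 => ⟨tau, tau_mem_That, by simp [gate, omega_mul_tau]⟩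
  | n + 1 => by
    refine ⟨tau ^ 2, pow_mem tau_mem_That 2, ?_⟩
    have h : tau⁻¹ * phi = phi * omega * tau ^ 2 := pr_eq_pr_iff.2 (.inl (Units.ext (by decide)))
    simp only [gate, pow_succ, mul_assoc] at h ⊢
    rw [h]

lemma gate_mem : ∀ i, gate i ∈ cover
  | 0 => ⟨1, one_mem _, 1, one_mem _, one_mul 1⟩
  | i + 1 => by
    obtain ⟨y, hy, h⟩ := exists_gate_succ_eq i
    rw [h]
    exact mul_mem_coe_mul_coe_of_mem_right (gate_mul_omega_mem (gate_mem i)) hy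

lemma tau_inv_pow_mul_phi_pow_mem (n j : ℕ) : tau⁻¹ ^ n * phi ^ j ∈ cover := by
  rcases phi_pow_cases j with h | h | h <;> rw [h]
  · exact ⟨1, one_mem _, tau⁻¹ ^ n, pow_mem (inv_mem tau_mem_That) n, by simp⟩
  · exact gate_mem (n + 1)
  · have hgate : tau⁻¹ ^ n * phi⁻¹ = gate (n + 1) * omega * tau := by
      have : phi⁻¹ = phi * omega * tau := pr_eq_pr_iff.2 (.inr (Units.ext (by decide)))
      simp only [gate, this, mul_assoc]
    rw [hgate]
    exact mul_mem_coe_mul_coe_of_mem_right (gate_mul_omega_mem (gate_mem (n + 1))) tau_mem_That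

lemma gate_mul_omega_mul_phi_pow_mem {i : ℕ} (hi : d i ≠ .two) (j : ℕ) :
    gate i * omega * phi ^ j ∈ cover := by
  rcases phi_pow_cases j with h | h | h <;> rw [h, mul_assoc]
  · simpa using gate_mul_omega_mem (gate_mem i)
  · rw [← omega_mul_tau, ← mul_assoc omega, omega_mul_omega, one_mul]
    exact mul_mem_coe_mul_coe_of_mem_right (gate_mem i) tau_mem_That
  · obtain ⟨y, hy, h⟩ := exists_omega_mul_phi_inv_eq_localGen_mul hi
    rw [h, ← zpow_one (d i).localGen]
    exact gate_mul_localGen_zpow_mul_mem (gate_mem i) 1 hy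

lemma triangleTranslates_subset : triangleTranslates d ⊆ cover := by
  rintro _ ⟨_, ⟨s, hs, r, hr, rfl⟩, x, hx, rfl⟩
  obtain ⟨j, hj⟩ := exists_eq_phi_pow_or_of_mem_triangleStabilizer hx
  have key : ∀ j : ℕ, r * phi ^ j ∈ cover := by
    intro j
    rcases hr with ⟨n, rfl⟩ | ⟨i, hi, rfl⟩
    exacts [tau_inv_pow_mul_phi_pow_mem n j, gate_mul_omega_mul_phi_pow_mem hi j]
  simp only [mul_assoc s]
  refine mul_mem_coe_mul_coe_of_mem_left hs ?_
  rcases hj with rfl | rfl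
  · exact key j
  · rw [kappa_eq_phi_mul, ← mul_assoc (phi ^ j), ← pow_succ, ← mul_assoc]
    exact mul_mem_coe_mul_coe_of_mem_right (key (j + 1))
      (mul_mem (inv_mem tau_mem_That) nu_mem_That)

end Cusps

lemma isNeumann_neumannSubgroup (d : ℕ → FactorKind) : IsNeumann (neumannSubgroup d) :=
  ⟨Set.univ_subset_iff.1 (triangleTranslates_eq_univ (d := d) ▸ triangleTranslates_subset),
    neumannSubgroup_inf_That d⟩

theorem exists_neumann_with_klm_structure_general (k l m : ℕ∞) (hsum : k + l + m = ⊤) :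
    ∃ Shat : Subgroup Mhat, IsNeumann Shat ∧ (Shat ≤ Msub ↔ m = 0) ∧
      HasKLMStructure Shat k l m := by
  let c : FactorKind → ℕ∞
    | .two => k
    | .three => l
    | .infinite => m
  obtain ⟨t₀, ht₀⟩ : ∃ t, c t = ⊤ := by
    rcases WithTop.add_eq_top.1 hsum with h | h
    · rcases WithTop.add_eq_top.1 h with h | h
      exacts [⟨.two, h⟩, ⟨.three, h⟩]
    · exact ⟨.infinite, h⟩
  obtain ⟨d, hd⟩ := exists_fiber_encard_eq c ht₀
  refine ⟨neumannSubgroup d, isNeumann_neumannSubgroup d, ?_, ?_⟩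
  · have hm : {i | d i = .infinite}.encard = m := hd .infinite
    rw [neumannSubgroup_le_Msub_iff, ← hm, Set.encard_eq_zero, Set.eq_empty_iff_forall_notMem]
    rfl
  · simpa only [hd] using hasKLMStructure_neumannSubgroup d

/-- Every admissible (k,l,m)-structure (k + l + m = ∞, m ≥ 1)
is realized by some Neumann subgroup of M̂ = PGL(2,ℤ) not contained in
M = PSL(2,ℤ). -/
theorem exists_neumann_with_klm_structure
    (k l m : ℕ∞) (hsum : k + l + m = ⊤) (hm : 1 ≤ m) :
    ∃ Shat : Subgroup Mhat, IsNeumann Shat ∧ ¬ Shat ≤ Msub ∧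
      HasKLMStructure Shat k l m := by
  obtain ⟨S, hS, hSM, hklm⟩ := exists_neumann_with_klm_structure_general k l m hsum
  exact ⟨S, hS, fun h => (Order.one_le_iff_pos.1 hm).ne' (hSM.1 h), hklm⟩
end
end

section
/- A subgroup Ŝ of M̂ = PGL(2,ℤ) is a Neumann subgroup if and only if the right action of τ on the right coset space Ŝ\M̂ (given by Ŝg ↦ Ŝgτ) has exactly two orbits, both of which are infinite, and the map Ŝg ↦ Ŝgν exchanges these two orbits. -/
open Matrix Pointwise

noncomputable section

/-- The right coset space S\G. -/
abbrev RC {G : Type*} [Group G] (S : Subgroup G) := Quotient (QuotientGroup.rightRel S)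

/-- Right multiplication on the right coset space: Sg ↦ Sgh. -/
def rmul {G : Type*} [Group G] (S : Subgroup G) (h : G) : RC S → RC S :=
  Quotient.map' (· * h) (fun a b hab => by
    rw [QuotientGroup.rightRel_apply] at hab ⊢
    have : b * h * (a * h)⁻¹ = b * a⁻¹ := by group
    rw [this]; exact hab)

/-- The orbit of a right coset under right multiplication by powers of τ. -/
def tauOrbit (S : Subgroup Mhat) (x : RC S) : Set (RC S) :=
  {y | ∃ n : ℤ, rmul S (tau ^ n) x = y}

/-- The natural map from the right coset space (Shat ∩ M)\M to the right coset
space Shat\M̂, sending Sg to Shatg. -/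
def cosetMap (S : Subgroup Mhat) : RC ((S ⊓ Msub).subgroupOf Msub) → RC S :=
  Quotient.map' Subtype.val (fun a b hab => by
    rw [QuotientGroup.rightRel_apply] at hab ⊢
    rw [Subgroup.mem_subgroupOf] at hab
    exact (Subgroup.mem_inf.mp (by exact_mod_cast hab)).1)

/-!
Write `T = ⟨t, v⟩` with `v` normalizing `⟨t⟩`, `v² ∈ ⟨t⟩` and `v ∉ ⟨t⟩`, so that `T` is the
disjoint union of `⟨t⟩` and `v⟨t⟩`. The `⟨t⟩`-orbits in `S \ G` correspond to the double cosets
`S g ⟨t⟩`, so `S T = G` says that the orbits of `S` and `S v` cover `S \ G`. Likewise `S ∩ T = 1`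
splits into `S ∩ v⟨t⟩ = ∅`, which says that these two orbits are distinct, and `S ∩ ⟨t⟩ = 1`,
which for `t` of infinite order says that the orbit of `S` is infinite. Since `v` normalizes `⟨t⟩`
and `v² ∈ ⟨t⟩`, right multiplication by `v` exchanges the orbits of `S` and `S v`, which also
makes the second one infinite. Conversely, of two orbits exchanged by `v`, one is the orbit of
`S`, and the other is then the orbit of `S v`.
-/

section RightOrbit

variable {G : Type*} [Group G] {S A : Subgroup G}

/-- The right coset `Sg`, as a point of the coset space `S \ G`. -/
def RC.mk (S : Subgroup G) (g : G) : RC S := Quotient.mk'' g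

theorem RC.mk_surjective : Function.Surjective (RC.mk S) := Quotient.mk''_surjective

theorem RC.mk_eq_mk_iff {g h : G} : RC.mk S g = RC.mk S h ↔ h * g⁻¹ ∈ S := by
  rw [RC.mk, RC.mk, Quotient.eq'', QuotientGroup.rightRel_apply]

@[simp]
theorem rmul_mk (g h : G) : rmul S h (RC.mk S g) = RC.mk S (g * h) := rfl

theorem rmul_injective (h : G) : Function.Injective (rmul S h) := by
  refine Function.LeftInverse.injective (g := rmul S h⁻¹) fun x => ?_
  obtain ⟨g, rfl⟩ := RC.mk_surjective x
  simp

/-- The orbit of a right coset of `S` under right multiplication by the subgroup `A`. -/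
def rightOrbit (S A : Subgroup G) (x : RC S) : Set (RC S) := (fun a => rmul S a x) '' A

theorem mk_preimage_rightOrbit_mk (g : G) :
    RC.mk S ⁻¹' rightOrbit S A (RC.mk S g) = DoubleCoset.doubleCoset g S A := by
  ext h
  simp only [rightOrbit, Set.mem_preimage, Set.mem_image, rmul_mk, RC.mk_eq_mk_iff,
    DoubleCoset.mem_doubleCoset, SetLike.mem_coe]
  constructor
  · rintro ⟨a, ha, hs⟩
    exact ⟨_, hs, a, ha, by group⟩
  · rintro ⟨s, hs, a, ha, rfl⟩
    exact ⟨a, ha, by simpa [mul_assoc] using hs⟩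

theorem mk_mem_rightOrbit_mk_one_iff {g : G} :
    RC.mk S g ∈ rightOrbit S A (RC.mk S 1) ↔ g ∈ (S : Set G) * (A : Set G) := by
  rw [← Set.mem_preimage, mk_preimage_rightOrbit_mk, DoubleCoset.doubleCoset, Set.singleton_one,
    mul_one]

theorem rightOrbit_eq_of_mem {x y : RC S} (h : y ∈ rightOrbit S A x) :
    rightOrbit S A y = rightOrbit S A x := by
  obtain ⟨g, rfl⟩ := RC.mk_surjective x
  obtain ⟨k, rfl⟩ := RC.mk_surjective y
  apply RC.mk_surjective.preimage_injective
  rw [← Set.mem_preimage, mk_preimage_rightOrbit_mk] at h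
  simpa only [mk_preimage_rightOrbit_mk] using DoubleCoset.doubleCoset_eq_of_mem h

theorem mem_rightOrbit_self (x : RC S) : x ∈ rightOrbit S A x := by
  obtain ⟨g, rfl⟩ := RC.mk_surjective x
  exact ⟨1, A.one_mem, by simp⟩

theorem disjoint_rightOrbit_iff {x y : RC S} :
    Disjoint (rightOrbit S A x) (rightOrbit S A y) ↔ y ∉ rightOrbit S A x := by
  refine ⟨fun h hy => Set.disjoint_left.mp h hy (mem_rightOrbit_self y), fun hy => ?_⟩
  refine Set.disjoint_left.mpr fun z hzx hzy => hy ?_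
  rw [← rightOrbit_eq_of_mem hzx, rightOrbit_eq_of_mem hzy]
  exact mem_rightOrbit_self y

theorem rmul_image_rightOrbit_mk {v : G} (hv : v ∈ Subgroup.normalizer (A : Set G)) (g : G) :
    rmul S v '' rightOrbit S A (RC.mk S g) = rightOrbit S A (RC.mk S (g * v)) := by
  have hconj : MulAut.conj v⁻¹ '' (A : Set G) = A :=
    Subgroup.mem_normalizer_iff_conj_image_eq.mp (inv_mem hv)
  conv_rhs => rw [rightOrbit, ← hconj]
  simp only [rightOrbit, Set.image_image, rmul_mk, MulAut.conj_apply, inv_inv, mul_assoc,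
    mul_inv_cancel_left]

theorem injOn_rmul_mk_one_iff_disjoint :
    Set.InjOn (fun a => rmul S a (RC.mk S 1)) A ↔ Disjoint S A := by
  simp only [Set.InjOn, rmul_mk, one_mul, RC.mk_eq_mk_iff, Subgroup.disjoint_def,
    SetLike.mem_coe]
  constructor
  · intro hinj a haS haA
    exact (hinj A.one_mem haA (by simpa using haS)).symm
  · intro hdisj a ha b hb hba
    exact (mul_inv_eq_one.mp (hdisj hba (A.mul_mem hb (A.inv_mem ha)))).symm

theorem disjoint_zpowers_of_rightOrbit_infinite {t : G}
    (hinf : (rightOrbit S (Subgroup.zpowers t) (RC.mk S 1)).Infinite) :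
    Disjoint S (Subgroup.zpowers t) := by
  by_contra hdisj
  obtain ⟨n, hnS, hn⟩ : ∃ n : ℤ, t ^ n ∈ S ∧ t ^ n ≠ 1 := by
    simpa [Subgroup.disjoint_def, Subgroup.mem_zpowers_iff] using hdisj
  have hn0 : n ≠ 0 := by
    rintro rfl
    exact hn (zpow_zero t)
  refine hinf (((Set.finite_Ico 0 |n|).image fun k : ℤ => RC.mk S (t ^ k)).subset ?_)
  rintro _ ⟨_, ⟨m, rfl⟩, rfl⟩
  refine ⟨m % n, ⟨Int.emod_nonneg m hn0, Int.emod_lt_abs m hn0⟩, ?_⟩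
  have hquot : t ^ m * (t ^ (m % n))⁻¹ = (t ^ n) ^ (m / n) := by
    rw [← _root_.zpow_sub, Int.emod_def, sub_sub_cancel, _root_.zpow_mul]
  simpa only [rmul_mk, one_mul, RC.mk_eq_mk_iff, hquot] using S.zpow_mem hnS _

theorem rightOrbit_zpowers_infinite_iff_disjoint {t : G} (ht : ¬IsOfFinOrder t) :
    (rightOrbit S (Subgroup.zpowers t) (RC.mk S 1)).Infinite ↔
      Disjoint S (Subgroup.zpowers t) :=
  ⟨disjoint_zpowers_of_rightOrbit_infinite, fun hdisj =>
    (infinite_zpowers.mpr ht).image (injOn_rmul_mk_one_iff_disjoint.mpr hdisj)⟩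

end RightOrbit

section Complement

variable {G : Type*} [Group G] {S T A : Subgroup G} {v t : G}

theorem coe_sup_zpowers_eq_union (hnorm : v ∈ Subgroup.normalizer (A : Set G))
    (hsq : v * v ∈ A) :
    ((A ⊔ Subgroup.zpowers v : Subgroup G) : Set G) = (A : Set G) ∪ {v} * (A : Set G) := by
  rw [sup_comm, Subgroup.coe_mul_of_left_le_normalizer_right _ _ (by simpa using hnorm)]
  refine Set.Subset.antisymm ?_ (Set.union_subset (fun a ha => ⟨1, one_mem _, a, ha, one_mul a⟩)
    (Set.mul_subset_mul_right (by simp)))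
  rintro _ ⟨_, ⟨n, rfl⟩, a, ha, rfl⟩
  have hpow (k : ℤ) : v ^ (2 * k) ∈ A := by
    rw [_root_.zpow_mul, zpow_two]
    exact A.zpow_mem hsq k
  obtain ⟨k, rfl | rfl⟩ := n.even_or_odd'
  · exact Or.inl (A.mul_mem (hpow k) ha)
  · refine Or.inr ⟨v, rfl, v ^ (2 * k) * a, A.mul_mem (hpow k) ha, ?_⟩
    simp only [add_comm (2 * k), _root_.zpow_one_add, mul_assoc]

theorem mul_eq_univ_iff_rightOrbit_union (hT : (T : Set G) = (A : Set G) ∪ {v} * (A : Set G)) :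
    (S : Set G) * (T : Set G) = Set.univ ↔
      rightOrbit S A (RC.mk S 1) ∪ rightOrbit S A (RC.mk S v) = Set.univ := by
  rw [← RC.mk_surjective.preimage_injective.eq_iff, Set.preimage_union, Set.preimage_univ,
    mk_preimage_rightOrbit_mk, mk_preimage_rightOrbit_mk, DoubleCoset.doubleCoset,
    DoubleCoset.doubleCoset, Set.singleton_one, mul_one, mul_assoc, ← Set.mul_union, hT]

theorem disjoint_iff_disjoint_rightOrbit (hT : (T : Set G) = (A : Set G) ∪ {v} * (A : Set G))
    (hv : v ∉ A) :
    Disjoint S T ↔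
      Disjoint (rightOrbit S A (RC.mk S 1)) (rightOrbit S A (RC.mk S v)) ∧ Disjoint S A := by
  have mem_T {g : G} : g ∈ T ↔ g ∈ A ∨ v⁻¹ * g ∈ A := by
    simp [← SetLike.mem_coe, hT]
  rw [disjoint_rightOrbit_iff, mk_mem_rightOrbit_mk_one_iff]
  constructor
  · refine fun hST => ⟨?_, hST.mono_right fun a ha => mem_T.mpr (Or.inl ha)⟩
    rintro ⟨s, hs, a, ha, rfl⟩
    have hsT : s ∈ T := mem_T.mpr (Or.inr (by simpa using ha))
    obtain rfl := Subgroup.disjoint_def.mp hST hs hsT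
    exact hv (by simpa using ha)
  · rintro ⟨hvSA, hSA⟩
    refine Subgroup.disjoint_def.mpr fun {g} hgS hgT => ?_
    obtain hgA | hvgA := mem_T.mp hgT
    · exact Subgroup.disjoint_def.mp hSA hgS hgA
    · exact absurd ⟨g, hgS, (v⁻¹ * g)⁻¹, A.inv_mem hvgA, by group⟩ hvSA

theorem isComplement'_iff_disjoint_and_mul_eq_univ :
    S.IsComplement' T ↔ Disjoint S T ∧ (S : Set G) * (T : Set G) = Set.univ :=
  ⟨fun h => ⟨h.disjoint, h.mul_eq⟩,
    fun h => Subgroup.isComplement'_of_disjoint_and_mul_eq_univ h.1 h.2⟩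

theorem isComplement'_sup_zpowers_iff (ht : ¬IsOfFinOrder t)
    (hnorm : v ∈ Subgroup.normalizer (Subgroup.zpowers t : Set G))
    (hsq : v * v ∈ Subgroup.zpowers t) (hv : v ∉ Subgroup.zpowers t) :
    S.IsComplement' (Subgroup.zpowers t ⊔ Subgroup.zpowers v) ↔
      rightOrbit S (Subgroup.zpowers t) (RC.mk S 1) ∪
          rightOrbit S (Subgroup.zpowers t) (RC.mk S v) = Set.univ ∧
        Disjoint (rightOrbit S (Subgroup.zpowers t) (RC.mk S 1))
          (rightOrbit S (Subgroup.zpowers t) (RC.mk S v)) ∧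
        (rightOrbit S (Subgroup.zpowers t) (RC.mk S 1)).Infinite := by
  have hT := coe_sup_zpowers_eq_union hnorm hsq
  rw [isComplement'_iff_disjoint_and_mul_eq_univ, disjoint_iff_disjoint_rightOrbit hT hv,
    mul_eq_univ_iff_rightOrbit_union hT, rightOrbit_zpowers_infinite_iff_disjoint ht, and_comm]

theorem mem_normalizer_zpowers_of_conj_eq_inv (h : v * t * v⁻¹ = t⁻¹) :
    v ∈ Subgroup.normalizer (Subgroup.zpowers t : Set G) := by
  rw [Subgroup.mem_normalizer_iff_map_conj_eq, MonoidHom.map_zpowers]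
  simp [h]

theorem isNeumann_iff_two_infinite_tau_orbits_general (ht : ¬IsOfFinOrder t)
    (hnorm : v ∈ Subgroup.normalizer (Subgroup.zpowers t : Set G))
    (hsq : v * v ∈ Subgroup.zpowers t) (hv : v ∉ Subgroup.zpowers t) (S : Subgroup G) :
    S.IsComplement' (Subgroup.zpowers t ⊔ Subgroup.zpowers v) ↔ ∃ x y : RC S,
      rightOrbit S (Subgroup.zpowers t) x ∪ rightOrbit S (Subgroup.zpowers t) y = Set.univ ∧
      Disjoint (rightOrbit S (Subgroup.zpowers t) x) (rightOrbit S (Subgroup.zpowers t) y) ∧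
      (rightOrbit S (Subgroup.zpowers t) x).Infinite ∧
      (rightOrbit S (Subgroup.zpowers t) y).Infinite ∧
      rmul S v '' rightOrbit S (Subgroup.zpowers t) x = rightOrbit S (Subgroup.zpowers t) y ∧
      rmul S v '' rightOrbit S (Subgroup.zpowers t) y = rightOrbit S (Subgroup.zpowers t) x := by
  set orbit := rightOrbit S (Subgroup.zpowers t)
  have image_orbit (g : G) : rmul S v '' orbit (RC.mk S g) = orbit (RC.mk S (g * v)) :=
    rmul_image_rightOrbit_mk hnorm g
  have image_orbit_one : rmul S v '' orbit (RC.mk S 1) = orbit (RC.mk S v) := by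
    rw [image_orbit, one_mul]
  rw [isComplement'_sup_zpowers_iff ht hnorm hsq hv]
  constructor
  · rintro ⟨hcover, hdisj, hinf⟩
    refine ⟨RC.mk S 1, RC.mk S v, hcover, hdisj, hinf, ?_, image_orbit_one, ?_⟩
    · exact image_orbit_one ▸ hinf.image (rmul_injective v).injOn
    · rw [image_orbit]
      exact rightOrbit_eq_of_mem ⟨v * v, hsq, by simp⟩
  · rintro ⟨x, y, hcover, hdisj, hinfx, hinfy, hxy, hyx⟩
    wlog hx : RC.mk S 1 ∈ orbit x generalizing x y
    · have hy : RC.mk S 1 ∈ orbit y := (Set.eq_univ_iff_forall.mp hcover _).resolve_left hx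
      exact this y x (Set.union_comm _ _ ▸ hcover) hdisj.symm hinfy hinfx hyx hxy hy
    have hx_eq : orbit x = orbit (RC.mk S 1) := (rightOrbit_eq_of_mem hx).symm
    have hy_eq : orbit y = orbit (RC.mk S v) := by rw [← hxy, hx_eq, image_orbit_one]
    rw [hx_eq] at hcover hdisj hinfx
    rw [hy_eq] at hcover hdisj
    exact ⟨hcover, hdisj, hinfx⟩

end Complement

theorem isNeumann_iff_isComplement' {S : Subgroup Mhat} : IsNeumann S ↔ S.IsComplement' That := by
  rw [isComplement'_iff_disjoint_and_mul_eq_univ, IsNeumann, disjoint_iff, and_comm]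

theorem that_eq_sup_zpowers : That = Subgroup.zpowers tau ⊔ Subgroup.zpowers nu := by
  rw [That, Set.insert_eq, Subgroup.closure_union, Subgroup.zpowers_eq_closure,
    Subgroup.zpowers_eq_closure]

theorem tauOrbit_eq_rightOrbit (S : Subgroup Mhat) :
    tauOrbit S = rightOrbit S (Subgroup.zpowers tau) := by
  ext x y
  simp [tauOrbit, rightOrbit, Subgroup.mem_zpowers_iff]

theorem nu_mul_nu : nu * nu = 1 := by
  have : nuGL * nuGL = 1 := Units.ext (by decide)
  rw [nu, ← map_mul, this, map_one]

theorem nu_mul_tau_mul_nu_inv : nu * tau * nu⁻¹ = tau⁻¹ := by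
  have : nuGL * tauGL * nuGL⁻¹ = tauGL⁻¹ := Units.ext (by decide)
  simp only [nu, tau, ← map_mul, ← map_inv, this]

theorem coe_tauGL_pow (n : ℕ) : (tauGL ^ n : GL2Z) = !![1, (n : ℤ); 0, 1] := by
  have : tauGL = GeneralLinearGroup.upperRightHom 1 := Units.ext rfl
  rw [this, ← AddChar.map_nsmul_eq_pow]
  simp

theorem pr_eq_one_iff {g : GL2Z} : pr g = 1 ↔ g = 1 ∨ g = -1 := by
  rw [pr, QuotientGroup.mk'_apply, QuotientGroup.eq_one_iff, pmI, Subgroup.mem_zpowers_iff]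
  constructor
  · rintro ⟨k, rfl⟩
    exact k.even_or_odd.imp Even.neg_one_zpow Odd.neg_one_zpow
  · rintro (rfl | rfl)
    exacts [⟨0, zpow_zero _⟩, ⟨1, zpow_one _⟩]

theorem not_isOfFinOrder_tau : ¬IsOfFinOrder tau := by
  rw [isOfFinOrder_iff_pow_eq_one]
  rintro ⟨n, hn, h⟩
  rw [tau, ← map_pow, pr_eq_one_iff] at h
  have upper_right : (tauGL ^ n : GL2Z) 0 1 = 0 := by
    obtain h | h := h <;> simp [h]
  rw [coe_tauGL_pow] at upper_right
  exact hn.ne' (by simpa using upper_right)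

/-- The determinant of a class in `PGL(2,ℤ)`; it is well defined since `det (-I) = 1`. -/
def detMhat : Mhat →* ℤˣ :=
  QuotientGroup.lift pmI GeneralLinearGroup.det <| by
    rw [pmI, Subgroup.zpowers_le]
    exact Units.ext (by decide)

theorem nu_notMem_zpowers_tau : nu ∉ Subgroup.zpowers tau := by
  have det_tau : detMhat tau = 1 := Units.ext (by decide)
  have det_nu : detMhat nu = -1 := Units.ext (by decide)
  have hker : Subgroup.zpowers tau ≤ detMhat.ker := Subgroup.zpowers_le.mpr det_tau
  exact fun h => absurd (det_nu.symm.trans (hker h)) (by decide)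

/-- A subgroup Ŝ of M̂ = PGL(2,ℤ) is a Neumann subgroup iff
the right action of τ on the right coset space Ŝ\M̂ has exactly two orbits,
both infinite, and right multiplication by ν exchanges these two orbits. -/
theorem isNeumann_iff_two_infinite_tau_orbits (Shat : Subgroup Mhat) :
    IsNeumann Shat ↔ ∃ x y : RC Shat,
      tauOrbit Shat x ∪ tauOrbit Shat y = Set.univ ∧
      Disjoint (tauOrbit Shat x) (tauOrbit Shat y) ∧
      (tauOrbit Shat x).Infinite ∧ (tauOrbit Shat y).Infinite ∧
      rmul Shat nu '' tauOrbit Shat x = tauOrbit Shat y ∧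
      rmul Shat nu '' tauOrbit Shat y = tauOrbit Shat x := by
  rw [isNeumann_iff_isComplement', that_eq_sup_zpowers, tauOrbit_eq_rightOrbit]
  exact isNeumann_iff_two_infinite_tau_orbits_general not_isOfFinOrder_tau
    (mem_normalizer_zpowers_of_conj_eq_inv nu_mul_tau_mul_nu_inv) (nu_mul_nu ▸ one_mem _)
    nu_notMem_zpowers_tau Shat
end
end

section
/- Every Neumann subgroup of M̂ = PGL(2,ℤ) is a maximal anisotropy subgroup of M̂: it is an anisotropy subgroup, and every subgroup of M̂ properly containing it fails to be an anisotropy subgroup. -/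
open Matrix Pointwise

noncomputable section

/-- The projective line over ℚ. -/
abbrev P1 := Projectivization ℚ (Fin 2 → ℚ)

/-- The linear automorphism of ℚ² induced by an element of GL(2,ℤ). -/
def lmap (g : GL2Z) : (Fin 2 → ℚ) →ₗ[ℚ] (Fin 2 → ℚ) :=
  Matrix.mulVecLin ((Int.castRingHom ℚ).mapMatrix (g : Matrix (Fin 2) (Fin 2) ℤ))

lemma lmap_mul (g h : GL2Z) : lmap (g * h) = (lmap g).comp (lmap h) := by
  unfold lmap
  rw [Units.val_mul, _root_.map_mul, Matrix.mulVecLin_mul]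

lemma lmap_one : lmap 1 = LinearMap.id := by
  unfold lmap
  rw [Units.val_one, _root_.map_one, Matrix.mulVecLin_one]

lemma lmap_inj (g : GL2Z) : Function.Injective (lmap g) := by
  apply Function.LeftInverse.injective (g := lmap g⁻¹)
  intro v
  rw [← LinearMap.comp_apply, ← lmap_mul, inv_mul_cancel, lmap_one, LinearMap.id_apply]


lemma pmap_congr {f f' : (Fin 2 → ℚ) →ₗ[ℚ] (Fin 2 → ℚ)} (h : f = f')
    (hf : Function.Injective f) :
    Projectivization.map f hf = Projectivization.map f' (h ▸ hf) := by
  subst h; rfl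

/-- The action of GL(2,ℤ) on the projective line over ℚ. -/
def pAct (g : GL2Z) : P1 → P1 := Projectivization.map (lmap g) (lmap_inj g)

lemma pAct_mul (g h : GL2Z) : pAct (g * h) = pAct g ∘ pAct h := by
  unfold pAct
  rw [pmap_congr (lmap_mul g h), Projectivization.map_comp]

lemma pAct_one : pAct 1 = id := by
  unfold pAct
  rw [pmap_congr lmap_one, Projectivization.map_id]

/-- The homomorphism from GL(2,ℤ) to permutations of ℙ¹(ℚ). -/
def permOfGL : GL2Z →* Equiv.Perm P1 where
  toFun g :=
    { toFun := pAct g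
      invFun := pAct g⁻¹
      left_inv := fun x => by
        rw [← Function.comp_apply (f := pAct g⁻¹), ← pAct_mul, inv_mul_cancel, pAct_one, id_eq]
      right_inv := fun x => by
        rw [← Function.comp_apply (f := pAct g), ← pAct_mul, mul_inv_cancel, pAct_one, id_eq] }
  map_one' := by
    ext x
    simp [pAct_one]
  map_mul' g h := by
    ext x
    simp [pAct_mul]

lemma permOfGL_neg_one : permOfGL (-1) = 1 := by
  have hl : ∀ v : Fin 2 → ℚ, lmap (-1) v = -v := by
    intro v
    rw [lmap, Matrix.mulVecLin_apply, Units.val_neg, Units.val_one, map_neg, _root_.map_one,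
      Matrix.neg_mulVec, Matrix.one_mulVec]
  ext x
  induction' x using Projectivization.ind with v hv
  show pAct (-1) (Projectivization.mk ℚ v hv) = Projectivization.mk ℚ v hv
  rw [pAct, Projectivization.map_mk]
  rw [Projectivization.mk_eq_mk_iff]
  exact ⟨-1, by rw [hl]; simp⟩

lemma pmI_le_ker : pmI ≤ permOfGL.ker := by
  rintro x hx
  obtain ⟨k, hk⟩ := Subgroup.mem_zpowers_iff.mp hx
  rw [MonoidHom.mem_ker, ← hk, map_zpow, permOfGL_neg_one, _root_.one_zpow]

/-- The action of PGL(2,ℤ) on the projective line over ℚ. -/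
def permHom : Mhat →* Equiv.Perm P1 :=
  QuotientGroup.lift pmI permOfGL (fun x hx => pmI_le_ker hx)

instance : MulAction Mhat P1 := MulAction.compHom P1 permHom

/-- An isotropy subgroup of PGL(2,ℤ): the stabilizer of a point of ℙ¹(ℚ). -/
def IsIsotropy (P : Subgroup Mhat) : Prop := ∃ p : P1, P = MulAction.stabilizer Mhat p

/-- An anisotropy subgroup: one intersecting every isotropy subgroup trivially. -/
def IsAnisotropy (S : Subgroup Mhat) : Prop := ∀ P : Subgroup Mhat, IsIsotropy P → S ⊓ P = ⊥

/-!
A Neumann subgroup is a complement of a point stabilizer of a transitive action: `That` is the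
stabilizer of `∞`, and `Mhat` is transitive on `P1` because every coprime pair of integers is the
first column of a matrix of determinant one. In any transitive action a complement `S` of a
stabilizer `H` acts simply transitively, so it meets every stabilizer trivially; and a subgroup `U`
containing `S` satisfies `U = S * (H ⊓ U)`, so `U` cannot be larger than `S` without meeting `H`
nontrivially.
-/

section MulAction

variable {G X : Type*} [Group G] [MulAction G X] {S H U : Subgroup G} {x : X}

lemma isPretransitive_of_mul_stabilizer_eq_univ [MulAction.IsPretransitive G X]
    (hS : (S : Set G) * (MulAction.stabilizer G x : Set G) = Set.univ) :
    MulAction.IsPretransitive S X := by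
  refine (MulAction.isPretransitive_iff_base x).2 fun y ↦ ?_
  obtain ⟨g, rfl⟩ := MulAction.exists_smul_eq G x y
  obtain ⟨s, hs, t, ht, rfl⟩ := Set.mem_mul.1 (hS ▸ Set.mem_univ g)
  exact ⟨⟨s, hs⟩, by rw [mul_smul, MulAction.mem_stabilizer_iff.1 ht, Subgroup.mk_smul]⟩

lemma disjoint_stabilizer_iff_stabilizer_eq_bot :
    Disjoint S (MulAction.stabilizer G x) ↔ MulAction.stabilizer S x = ⊥ := by
  rw [disjoint_comm, ← Subgroup.subgroupOf_eq_bot]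
  rfl

lemma disjoint_stabilizer_of_isPretransitive [MulAction.IsPretransitive S X]
    (hx : Disjoint S (MulAction.stabilizer G x)) (y : X) :
    Disjoint S (MulAction.stabilizer G y) := by
  obtain ⟨s, rfl⟩ := MulAction.exists_smul_eq S x y
  rw [disjoint_stabilizer_iff_stabilizer_eq_bot] at hx ⊢
  rw [MulAction.stabilizer_smul_eq_stabilizer_map_conj, hx, Subgroup.map_bot]

lemma eq_of_le_of_mul_eq_univ_of_disjoint (hSU : S ≤ U)
    (hS : (S : Set G) * (H : Set G) = Set.univ) (hU : Disjoint H U) : S = U := by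
  apply SetLike.coe_injective
  calc (S : Set G) = (S : Set G) * ((H ⊓ U : Subgroup G) : Set G) := by simp [hU.eq_bot]
    _ = (S : Set G) * (H : Set G) ∩ (U : Set G) := Subgroup.mul_inf_assoc S H U hSU
    _ = U := by rw [hS, Set.univ_inter]

end MulAction

section ProjectiveLine

open scoped OnePoint

lemma pr_surjective : Function.Surjective pr := QuotientGroup.mk'_surjective pmI

lemma pr_neg (g : GL2Z) : pr (-g) = pr g := by
  have pr_neg_one : pr (-1) = 1 :=
    (QuotientGroup.eq_one_iff (-1 : GL2Z)).2 (Subgroup.mem_zpowers (-1 : GL2Z))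
  rw [← neg_one_mul, map_mul, pr_neg_one, one_mul]

lemma pr_smul_s7 (g : GL2Z) (p : P1) :
    pr g • p = Matrix.GeneralLinearGroup.map (Int.castRingHom ℚ) g • p :=
  rfl

lemma pr_smul_equivProjectivization (g : GL2Z) (c : OnePoint ℚ) :
    pr g • OnePoint.equivProjectivization ℚ c =
      OnePoint.equivProjectivization ℚ
        (Matrix.GeneralLinearGroup.map (Int.castRingHom ℚ) g • c) := by
  rw [pr_smul_s7, OnePoint.equivProjectivization_smul]

/-- The point `∞ = [1 : 0]` of the projective line, the image of the point at infinity under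
Mathlib's identification of `OnePoint ℚ` with `P1`. -/
def inftyPoint : P1 := OnePoint.equivProjectivization ℚ ∞

lemma pr_smul_inftyPoint_eq_iff (g : GL2Z) : pr g • inftyPoint = inftyPoint ↔ g 1 0 = 0 := by
  rw [inftyPoint, pr_smul_equivProjectivization, Equiv.apply_eq_iff_eq,
    OnePoint.smul_infty_eq_self_iff]
  simp

instance isPretransitive_P1 : MulAction.IsPretransitive Mhat P1 := by
  refine (MulAction.isPretransitive_iff_base inftyPoint).2 fun p ↦ ?_
  obtain ⟨c, rfl⟩ := (OnePoint.equivProjectivization ℚ).surjective p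
  obtain ⟨g, rfl⟩ := c.exists_mem_SL2 ℤ
  exact ⟨pr g, pr_smul_equivProjectivization g ∞⟩

lemma tauGL_zpow (n : ℤ) : tauGL ^ n = Matrix.GeneralLinearGroup.upperRightHom n := by
  have tauGL_eq : tauGL = Matrix.GeneralLinearGroup.upperRightHom 1 := rfl
  rw [tauGL_eq, ← AddChar.map_zsmul_eq_zpow, zsmul_one, Int.cast_id]

lemma exists_pr_eq_tau_zpow_or_mul_nu {g : GL2Z} (hg : g 1 0 = 0) :
    ∃ n : ℤ, pr g = tau ^ n ∨ pr g = tau ^ n * nu := by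
  have hunit : IsUnit (g 0 0 * g 1 1) := by
    simpa [Matrix.det_fin_two, hg] using (Matrix.isUnit_iff_isUnit_det _).1 g.isUnit
  have h₀₀ : g 0 0 = 1 ∨ g 0 0 = -1 := Int.isUnit_iff.1 (isUnit_of_mul_isUnit_left hunit)
  have h₁₁ : g 1 1 = 1 ∨ g 1 1 = -1 := Int.isUnit_iff.1 (isUnit_of_mul_isUnit_right hunit)
  wlog hpos : g 1 1 = 1 generalizing g
  · have hneg : g 1 1 = -1 := h₁₁.resolve_left hpos
    rw [← pr_neg]
    apply this <;> simp_all [neg_eq_iff_eq_neg, or_comm]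
  refine ⟨g 0 1, h₀₀.imp (fun hone ↦ ?_) (fun hneg_one ↦ ?_)⟩
  · rw [tau, ← map_zpow, tauGL_zpow]
    congr 1
    ext i j
    fin_cases i <;> fin_cases j <;> simp [hg, hpos, hone]
  · rw [tau, nu, ← map_zpow, ← map_mul, tauGL_zpow]
    congr 1
    ext i j
    fin_cases i <;> fin_cases j <;> simp [hg, hpos, hneg_one, nuGL]

lemma That_eq_stabilizer : That = MulAction.stabilizer Mhat inftyPoint := by
  apply le_antisymm
  · rw [That, Subgroup.closure_le]
    rintro x (rfl | rfl)
    · exact (pr_smul_inftyPoint_eq_iff tauGL).2 rfl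
    · exact (pr_smul_inftyPoint_eq_iff nuGL).2 rfl
  · intro x hx
    obtain ⟨g, rfl⟩ := pr_surjective x
    have tau_mem : tau ∈ That := Subgroup.subset_closure (Set.mem_insert _ _)
    have nu_mem : nu ∈ That := Subgroup.subset_closure (Set.mem_insert_of_mem _ rfl)
    obtain ⟨n, hn | hn⟩ := exists_pr_eq_tau_zpow_or_mul_nu ((pr_smul_inftyPoint_eq_iff g).1 hx)
    · exact hn ▸ That.zpow_mem tau_mem n
    · exact hn ▸ That.mul_mem (That.zpow_mem tau_mem n) nu_mem

end ProjectiveLine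

lemma isAnisotropy_iff {S : Subgroup Mhat} :
    IsAnisotropy S ↔ ∀ p : P1, Disjoint S (MulAction.stabilizer Mhat p) := by
  simp only [IsAnisotropy, IsIsotropy, forall_exists_index, disjoint_iff]
  exact ⟨fun h p ↦ h _ p rfl, fun h _ p hp ↦ hp ▸ h p⟩

/-- Every Neumann subgroup of M̂ = PGL(2,ℤ) is a maximal
anisotropy subgroup of M̂. -/
theorem neumann_maximal_anisotropy (Shat : Subgroup Mhat) (hN : IsNeumann Shat) :
    IsAnisotropy Shat ∧ ∀ U : Subgroup Mhat, Shat < U → ¬ IsAnisotropy U := by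
  obtain ⟨hmul, hinf⟩ := hN
  rw [That_eq_stabilizer] at hmul hinf
  simp only [isAnisotropy_iff]
  constructor
  · have := isPretransitive_of_mul_stabilizer_eq_univ hmul
    exact disjoint_stabilizer_of_isPretransitive (disjoint_iff.2 hinf)
  · intro U hU hanis
    exact hU.ne (eq_of_le_of_mul_eq_univ_of_disjoint hU.le hmul (hanis inftyPoint).symm)
end
end
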